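/- arXiv:2307.03566 — 2 statements merged into one kernel-verified Lean document; each statement's English description precedes it below -/
import Mathlib

section
/- Let σ > 0. The α-quenching map Φ_σ is Lipschitz with constant 2: for all b₁, b₂ ∈ ℝ³, ‖Φ_σ(b₁) − Φ_σ(b₂)‖ ≤ 2‖b₁ − b₂‖. (This is the pointwise estimate underlying Lemma 3.4 of the paper, obtained from the identity Φ_σ(b₁) − Φ_σ(b₂) = [(1+σ‖b₂‖²)(b₁−b₂) + σ(‖b₂‖² − ‖b₁‖²)b₂] / ((1+σ‖b₁‖²)(1+σ‖b₂‖²)).) -/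
/-- The α-quenching map `Φ_σ : ℝ³ → ℝ³`, `Φ_σ(b) = (1 + σ‖b‖²)⁻¹ b`. -/
noncomputable def alphaQuench (σ : ℝ) (b : EuclideanSpace ℝ (Fin 3)) :
    EuclideanSpace ℝ (Fin 3) :=
  (1 + σ * ‖b‖ ^ 2)⁻¹ • b

theorem alphaQuench_lipschitz (σ : ℝ) (hσ : 0 < σ)
    (b₁ b₂ : EuclideanSpace ℝ (Fin 3)) :
    ‖alphaQuench σ b₁ - alphaQuench σ b₂‖ ≤ 2 * ‖b₁ - b₂‖ := by
  set x := ‖b₁‖ with hx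
  set y := ‖b₂‖ with hy
  set d := ‖b₁ - b₂‖ with hd
  have hx0 : 0 ≤ x := norm_nonneg _
  have hy0 : 0 ≤ y := norm_nonneg _
  have hd0 : 0 ≤ d := norm_nonneg _
  have hA : 0 < 1 + σ * x ^ 2 := by positivity
  have hB : 0 < 1 + σ * y ^ 2 := by positivity
  have hxy : |y - x| ≤ d := by
    rw [abs_sub_comm]
    exact abs_norm_sub_norm_le b₁ b₂
  have e : alphaQuench σ b₁ - alphaQuench σ b₂ =
      (1 + σ * x ^ 2)⁻¹ • (b₁ - b₂)
        + ((1 + σ * x ^ 2)⁻¹ - (1 + σ * y ^ 2)⁻¹) • b₂ := by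
    simp only [alphaQuench, ← hx, ← hy]
    module
  have e2 : (1 + σ * x ^ 2)⁻¹ - (1 + σ * y ^ 2)⁻¹ =
      (σ * (y + x) / ((1 + σ * x ^ 2) * (1 + σ * y ^ 2))) * (y - x) := by
    field_simp
    ring
  have hc : 0 ≤ σ * (y + x) / ((1 + σ * x ^ 2) * (1 + σ * y ^ 2)) := by positivity
  rw [e, e2]
  refine (norm_add_le _ _).trans ?_
  rw [norm_smul, norm_smul, norm_mul, Real.norm_of_nonneg hc,
    Real.norm_of_nonneg (inv_nonneg.2 hA.le), Real.norm_eq_abs, ← hy, ← hd]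
  have h1 : σ * (y + x) / ((1 + σ * x ^ 2) * (1 + σ * y ^ 2)) * |y - x| * y ≤
      σ * (y + x) / ((1 + σ * x ^ 2) * (1 + σ * y ^ 2)) * d * y := by gcongr
  have h2 : (1 + σ * x ^ 2)⁻¹ +
      σ * (y + x) / ((1 + σ * x ^ 2) * (1 + σ * y ^ 2)) * y ≤ 2 := by
    have e3 : (1 + σ * x ^ 2)⁻¹ +
        σ * (y + x) / ((1 + σ * x ^ 2) * (1 + σ * y ^ 2)) * y =
        (1 + σ * y ^ 2 + σ * (y + x) * y) / ((1 + σ * x ^ 2) * (1 + σ * y ^ 2)) := by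
      field_simp
    rw [e3, div_le_iff₀ (by positivity)]
    nlinarith [sq_nonneg (1 - σ * x * y), sq_nonneg (σ * x * y),
      mul_nonneg hσ.le (sq_nonneg x)]
  nlinarith [mul_le_mul_of_nonneg_right h2 hd0]
end

section
/- Let σ > 0, R_α ≥ 0, R_m ≥ 0, M_f ≥ 0, M_u ≥ 0. Let c ∈ ℝ with |c| ≤ M_f and let u ∈ ℝ³ with ‖u‖ ≤ M_u. Then for all b₁, b₂ ∈ ℝ³, ‖R_α c (Φ_σ(b₁) − Φ_σ(b₂)) + R_m (u × (b₁ − b₂))‖ ≤ (2 R_α M_f + R_m M_u) ‖b₁ − b₂‖, where × denotes the cross product on ℝ³. (This is the pointwise Lipschitz estimate for the dynamo nonlinearity G(B) = R_α f Φ_σ(B) + R_m (u × B) that underlies Lemma 3.4 of the paper.) -/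
/-- The standard cross product on ℝ³ (Euclidean space). -/
def cross3 (u v : EuclideanSpace ℝ (Fin 3)) : EuclideanSpace ℝ (Fin 3) :=
  WithLp.toLp 2 (crossProduct (u : Fin 3 → ℝ) (v : Fin 3 → ℝ))

theorem cross3_norm_le (u v : EuclideanSpace ℝ (Fin 3)) : ‖cross3 u v‖ ≤ ‖u‖ * ‖v‖ := by
  refine (sq_le_sq₀ (norm_nonneg _) (by positivity)).mp ?_
  rw [mul_pow, EuclideanSpace.real_norm_sq_eq, EuclideanSpace.real_norm_sq_eq,
    EuclideanSpace.real_norm_sq_eq]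
  simp only [cross3, cross_apply, Fin.sum_univ_three]
  simp
  nlinarith [sq_nonneg (u 0 * v 0 + u 1 * v 1 + u 2 * v 2)]

theorem alphaQuench_lip (σ : ℝ) (hσ : 0 < σ) (a b : EuclideanSpace ℝ (Fin 3)) :
    ‖alphaQuench σ a - alphaQuench σ b‖ ≤ 2 * ‖a - b‖ := by
  unfold alphaQuench
  have hx := norm_nonneg a
  have hy := norm_nonneg b
  have hd := norm_nonneg (a - b)
  have hxy : |‖b‖ - ‖a‖| ≤ ‖a - b‖ := by
    rw [abs_sub_comm]; exact abs_norm_sub_norm_le a b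
  have hP : 0 < 1 + σ * ‖a‖ ^ 2 := by positivity
  have hQ : 0 < 1 + σ * ‖b‖ ^ 2 := by positivity
  have e : (1 + σ * ‖a‖ ^ 2)⁻¹ • a - (1 + σ * ‖b‖ ^ 2)⁻¹ • b
      = (1 + σ * ‖a‖ ^ 2)⁻¹ • (a - b)
        + ((1 + σ * ‖a‖ ^ 2)⁻¹ - (1 + σ * ‖b‖ ^ 2)⁻¹) • b := by
    module
  have h1 : ‖(1 + σ * ‖a‖ ^ 2)⁻¹ • (a - b)‖ ≤ ‖a - b‖ := by
    rw [norm_smul, Real.norm_eq_abs, abs_of_pos (inv_pos.mpr hP)]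
    refine mul_le_of_le_one_left hd (inv_le_one_of_one_le₀ ?_)
    have : 0 ≤ σ * ‖a‖ ^ 2 := by positivity
    linarith
  have h2 : ‖((1 + σ * ‖a‖ ^ 2)⁻¹ - (1 + σ * ‖b‖ ^ 2)⁻¹) • b‖ ≤ ‖a - b‖ := by
    rw [norm_smul, Real.norm_eq_abs]
    generalize ‖a‖ = x at *
    generalize ‖b‖ = y at *
    generalize ‖a - b‖ = d at *
    have e2 : (1 + σ * x ^ 2)⁻¹ - (1 + σ * y ^ 2)⁻¹
        = (y - x) * (σ * (x + y) / ((1 + σ * x ^ 2) * (1 + σ * y ^ 2))) := by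
      field_simp
      ring
    have h0 : 0 ≤ σ * (x + y) / ((1 + σ * x ^ 2) * (1 + σ * y ^ 2)) := by positivity
    rw [e2, abs_mul, abs_of_nonneg h0, mul_assoc]
    have h3 : σ * (x + y) / ((1 + σ * x ^ 2) * (1 + σ * y ^ 2)) * y ≤ 1 := by
      rw [div_mul_eq_mul_div, div_le_one (by positivity)]
      have : 0 ≤ σ * x ^ 2 := by positivity
      nlinarith [sq_nonneg (σ * x * y - 1), sq_nonneg (σ * x * y)]
    calc _ ≤ d * 1 := mul_le_mul hxy h3 (by positivity) hd
      _ = d := mul_one d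
  rw [e]
  linarith [norm_add_le ((1 + σ * ‖a‖ ^ 2)⁻¹ • (a - b))
    (((1 + σ * ‖a‖ ^ 2)⁻¹ - (1 + σ * ‖b‖ ^ 2)⁻¹) • b)]

theorem dynamo_nonlinearity_lipschitz
    (σ Rα Rm Mf Mu : ℝ) (hσ : 0 < σ) (hRα : 0 ≤ Rα) (hRm : 0 ≤ Rm)
    (hMf : 0 ≤ Mf) (hMu : 0 ≤ Mu)
    (c : ℝ) (hc : |c| ≤ Mf) (u : EuclideanSpace ℝ (Fin 3)) (hu : ‖u‖ ≤ Mu)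
    (b₁ b₂ : EuclideanSpace ℝ (Fin 3)) :
    ‖(Rα * c) • (alphaQuench σ b₁ - alphaQuench σ b₂) + Rm • cross3 u (b₁ - b₂)‖
      ≤ (2 * Rα * Mf + Rm * Mu) * ‖b₁ - b₂‖ := by
  refine (norm_add_le _ _).trans ?_
  rw [norm_smul, norm_smul, Real.norm_eq_abs, Real.norm_eq_abs, abs_mul, abs_of_nonneg hRα,
    abs_of_nonneg hRm]
  have h1 : Rα * |c| * ‖alphaQuench σ b₁ - alphaQuench σ b₂‖ ≤ Rα * Mf * (2 * ‖b₁ - b₂‖) := by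
    gcongr
    exact alphaQuench_lip σ hσ b₁ b₂
  have h2 : Rm * ‖cross3 u (b₁ - b₂)‖ ≤ Rm * (Mu * ‖b₁ - b₂‖) := by
    gcongr
    exact (cross3_norm_le _ _).trans (by gcongr)
  linarith
end
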